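/- arXiv:2303.03182 — 2 statements merged into one kernel-verified Lean document; each statement's English description precedes it below -/
import Mathlib

section
/- Consider finitely many demand scenarios, each consisting of an active set A with |A| ≤ 2, a demand map d on A, a chosen leader group U for (A, d), and a nonnegative weight w(A, d). Then the weighted average D-MCCS rate equals the weighted average lower-bound rate as functions of the placement: R̄_MCCS(q) = Σ_{(A,d)} w(A,d) · R_MCCS(d; q) = Σ_{(A,d)} w(A,d) · R_lb(D; q) = R̄_lb(q) for every q ∈ [0,1]^N. Consequently, for any cache size M ≥ 0, the infimum of R̄_MCCS over the feasible set {q ∈ [0,1]^N : Σ_{n=1}^N q_n F_n ≤ M} equals the infimum of R̄_lb over the same set. -/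
/-!
The two rates agree scenario by scenario. If only one file is requested, there is a single leader,
the maximum over each group is constant, and counting the groups of each size that contain the
leader produces the binomial coefficients of the lower bound. Otherwise two users request distinct
files and both are leaders: the two singleton groups give the terms with `s = 0`, and since
`C(1, 1) = 1` while `C(0, 1) = 0`, only the first file of an ordering contributes at `s = 1`, so
maximising over orderings is maximising over the group of both users.
-/

open Finset

/-- Maximum of a real-valued function over a finite set (`0` if the set is empty). -/
noncomputable def maxOver {α : Type*} (S : Finset α) (f : α → ℝ) : ℝ :=
  if h : S.Nonempty then S.sup' h f else 0

/-- The D-MCCS delivery rate: the sum, over nonempty subsets `S ⊆ A` with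
`S ∩ U ≠ ∅` (the non-redundant groups), of
`max_{k ∈ S} q_{d_k}^{|S|−1} (1 − q_{d_k})^{|A|−|S|+1} F_{d_k}`. -/
noncomputable def R_MCCS {α : Type*} [DecidableEq α] {N : ℕ} (A U : Finset α)
    (d : α → Fin N) (q F : Fin N → ℝ) : ℝ :=
  ∑ S ∈ A.powerset.filter (fun S => (S ∩ U).Nonempty),
    maxOver S (fun k =>
      q (d k) ^ (S.card - 1) * (1 - q (d k)) ^ (A.card - S.card + 1) * F (d k))

/-- The lower-bound rate: the maximum over bijections `π : {1,…,|D|} → D` of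
`Σ_{s=0}^{|A|−1} Σ_{i=1}^{|D|} C(|A|−i, s) q_{π(i)}^s (1 − q_{π(i)})^{|A|−s} F_{π(i)}`,
where `Acard = |A|`. -/
noncomputable def R_lb {N : ℕ} (Acard : ℕ) (D : Finset (Fin N))
    (q F : Fin N → ℝ) : ℝ :=
  ⨆ π : Fin D.card ≃ {x : Fin N // x ∈ D},
    ∑ s ∈ Finset.range Acard, ∑ i : Fin D.card,
      ((Acard - (i.1 + 1)).choose s : ℝ) * q (π i).1 ^ s *
        (1 - q (π i).1) ^ (Acard - s) * F (π i).1

/-- `U` is a leader group for active set `A` with demand map `d`: `U ⊆ A`, the demand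
map is injective on `U`, and the users in `U` request exactly the distinct files
requested by the users in `A`. -/
def IsLeaderGroup {α : Type*} [DecidableEq α] {N : ℕ} (A U : Finset α)
    (d : α → Fin N) : Prop :=
  U ⊆ A ∧ Set.InjOn d ↑U ∧ U.image d = A.image d

lemma sum_powerset_filter_mem_apply_card {α M : Type*} [DecidableEq α] [AddCommMonoid M]
    {s : Finset α} {a : α} (ha : a ∈ s) (f : ℕ → M) :
    ∑ t ∈ s.powerset with a ∈ t, f t.card =
      ∑ m ∈ range s.card, (s.card - 1).choose m • f (m + 1) := by
  obtain ⟨r, har, rfl⟩ : ∃ r, a ∉ r ∧ insert a r = s :=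
    ⟨s.erase a, notMem_erase a s, insert_erase ha⟩
  have notMem_of_mem : ∀ t ∈ r.powerset, a ∉ t := fun t ht h => har (mem_powerset.1 ht h)
  calc ∑ t ∈ (insert a r).powerset with a ∈ t, f t.card
      = ∑ t ∈ r.powerset, f (t.card + 1) := by
        rw [sum_filter, sum_powerset_insert har,
          sum_eq_zero fun t ht => if_neg (notMem_of_mem t ht), zero_add]
        refine sum_congr rfl fun t ht => ?_
        rw [if_pos (mem_insert_self a t), card_insert_of_notMem (notMem_of_mem t ht)]
    _ = _ := by
        rw [sum_powerset_apply_card fun c => f (c + 1), card_insert_of_notMem har,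
          Nat.add_sub_cancel]

lemma surjective_equiv_apply {α β : Type*} (e : α ≃ β) (a : α) :
    Function.Surjective (fun π : α ≃ β => π a) := by
  classical
  exact fun b => ⟨(Equiv.swap a (e.symm b)).trans e, by simp⟩

section MaxOver

variable {α β : Type*}

lemma maxOver_eq_ciSup (S : Finset α) (f : α → ℝ) : maxOver S f = ⨆ x : {x // x ∈ S}, f x := by
  rcases S.eq_empty_or_nonempty with rfl | hS
  · simp [maxOver]
  · rw [maxOver, dif_pos hS, sup'_eq_csSup_image, sSup_image']
    rfl

lemma maxOver_empty (f : α → ℝ) : maxOver ∅ f = 0 := by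
  simp [maxOver]

lemma maxOver_singleton (a : α) (f : α → ℝ) : maxOver {a} f = f a := by
  simp [maxOver]

lemma maxOver_of_forall_eq {S : Finset α} (hS : S.Nonempty) {f : α → ℝ} {c : ℝ}
    (hf : ∀ x ∈ S, f x = c) : maxOver S f = c := by
  rw [maxOver, dif_pos hS, sup'_congr hS rfl hf, sup'_const]

lemma maxOver_image [DecidableEq β] (S : Finset α) (g : α → β) (f : β → ℝ) :
    maxOver (S.image g) f = maxOver S (fun x => f (g x)) := by
  simp [maxOver]

end MaxOver

namespace IsLeaderGroup

variable {α : Type*} [DecidableEq α] {N : ℕ} {A U : Finset α} {d : α → Fin N}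

lemma card_eq_card_image (hU : IsLeaderGroup A U d) : U.card = (A.image d).card := by
  rw [← hU.2.2, card_image_of_injOn hU.2.1]

lemma eq_of_injOn (hU : IsLeaderGroup A U d) (hd : Set.InjOn d A) : U = A :=
  eq_of_subset_of_card_le hU.1 (by rw [hU.card_eq_card_image, card_image_of_injOn hd])

end IsLeaderGroup

section MCCS

variable {α : Type*} [DecidableEq α] {N : ℕ} {A : Finset α} {d : α → Fin N}

lemma R_MCCS_singleton_leader {u : α} {x : Fin N} (hu : u ∈ A) (hd : ∀ k ∈ A, d k = x)
    (q F : Fin N → ℝ) :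
    R_MCCS A {u} d q F = ∑ s ∈ range A.card,
      ((A.card - 1).choose s : ℝ) * q x ^ s * (1 - q x) ^ (A.card - s) * F x := by
  have meets_iff (S : Finset α) : (S ∩ {u}).Nonempty ↔ u ∈ S := by
    rw [← not_disjoint_iff_nonempty_inter, disjoint_singleton_right, not_not]
  calc R_MCCS A {u} d q F
      = ∑ S ∈ A.powerset with u ∈ S,
          q x ^ (S.card - 1) * (1 - q x) ^ (A.card - S.card + 1) * F x := by
        simp only [R_MCCS, meets_iff]
        refine sum_congr rfl fun S hS => ?_
        obtain ⟨hSA, huS⟩ := mem_filter.1 hS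
        exact maxOver_of_forall_eq ⟨u, huS⟩ fun k hk => by rw [hd k (mem_powerset.1 hSA hk)]
    _ = ∑ s ∈ range A.card, (A.card - 1).choose s •
          (q x ^ (s + 1 - 1) * (1 - q x) ^ (A.card - (s + 1) + 1) * F x) :=
        sum_powerset_filter_mem_apply_card hu fun c =>
          q x ^ (c - 1) * (1 - q x) ^ (A.card - c + 1) * F x
    _ = _ := sum_congr rfl fun s hs => by
        have hexp : A.card - (s + 1) + 1 = A.card - s := by
          have := mem_range.1 hs
          omega
        rw [hexp, Nat.add_sub_cancel, nsmul_eq_mul, mul_assoc, mul_assoc, mul_assoc]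

lemma R_MCCS_self (q F : Fin N → ℝ) :
    R_MCCS A A d q F = ∑ S ∈ A.powerset, maxOver S (fun k =>
      q (d k) ^ (S.card - 1) * (1 - q (d k)) ^ (A.card - S.card + 1) * F (d k)) := by
  refine sum_filter_of_ne fun S hS hne => ?_
  rw [inter_eq_left.2 (mem_powerset.1 hS), nonempty_iff_ne_empty]
  rintro rfl
  exact hne (maxOver_empty _)

lemma R_MCCS_self_of_card_eq_two (hA : A.card = 2) (q F : Fin N → ℝ) :
    R_MCCS A A d q F = ∑ k ∈ A, (1 - q (d k)) ^ 2 * F (d k) +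
      maxOver A (fun k => q (d k) * (1 - q (d k)) * F (d k)) := by
  have hpair : powersetCard 2 A = {A} := hA ▸ powersetCard_self A
  rw [R_MCCS_self, sum_powerset, hA]
  simp [sum_range_succ, hpair, hA, powersetCard_one, maxOver_empty, maxOver_singleton]

end MCCS

section LowerBound

variable {N : ℕ}

lemma R_lb_eq_iSup_of_card_eq {n : ℕ} (m : ℕ) {D : Finset (Fin N)} (hD : D.card = n)
    (q F : Fin N → ℝ) :
    R_lb m D q F = ⨆ π : Fin n ≃ {x : Fin N // x ∈ D},
      ∑ s ∈ range m, ∑ i : Fin n,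
        ((m - (i.1 + 1)).choose s : ℝ) * q (π i).1 ^ s *
          (1 - q (π i).1) ^ (m - s) * F (π i).1 := by
  subst hD
  rfl

lemma R_lb_singleton (m : ℕ) (x : Fin N) (q F : Fin N → ℝ) :
    R_lb m {x} q F = ∑ s ∈ range m,
      ((m - 1).choose s : ℝ) * q x ^ s * (1 - q x) ^ (m - s) * F x := by
  have : Nonempty (Fin 1 ≃ {y : Fin N // y ∈ ({x} : Finset (Fin N))}) :=
    ⟨(equivFinOfCardEq (card_singleton x)).symm⟩
  have apply_eq (π : Fin 1 ≃ {y : Fin N // y ∈ ({x} : Finset (Fin N))}) (i) : (π i).1 = x :=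
    mem_singleton.1 (π i).2
  rw [R_lb_eq_iSup_of_card_eq m (card_singleton x)]
  simp only [apply_eq, Fin.sum_univ_one, Fin.val_zero, zero_add, ciSup_const]

lemma R_lb_two_of_card_eq_two {D : Finset (Fin N)} (hD : D.card = 2) (q F : Fin N → ℝ) :
    R_lb 2 D q F = ∑ x ∈ D, (1 - q x) ^ 2 * F x + maxOver D (fun x => q x * (1 - q x) * F x) := by
  have ordering_sum (π : Fin 2 ≃ {x : Fin N // x ∈ D}) :
      ∑ s ∈ range 2, ∑ i : Fin 2, ((2 - (i.1 + 1)).choose s : ℝ) * q (π i).1 ^ s *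
          (1 - q (π i).1) ^ (2 - s) * F (π i).1 =
        ∑ x ∈ D, (1 - q x) ^ 2 * F x + q (π 0).1 * (1 - q (π 0).1) * F (π 0).1 := by
    rw [← sum_coe_sort D, ← π.sum_comp]
    simp [sum_range_succ]
  have e : Fin 2 ≃ {x : Fin N // x ∈ D} := (equivFinOfCardEq hD).symm
  have : Nonempty {x : Fin N // x ∈ D} := ⟨e 0⟩
  simp only [R_lb_eq_iSup_of_card_eq 2 hD, ordering_sum]
  rw [(surjective_equiv_apply e 0).iSup_comp
      fun x => ∑ x ∈ D, (1 - q x) ^ 2 * F x + q x.1 * (1 - q x.1) * F x.1,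
    ← add_ciSup (Set.finite_range _).bddAbove, maxOver_eq_ciSup]

end LowerBound

section Equality

variable {α : Type*} [DecidableEq α] {N : ℕ} {A U : Finset α} {d : α → Fin N}

lemma R_MCCS_eq_R_lb_of_card_image_le_one (hU : IsLeaderGroup A U d)
    (hD : (A.image d).card ≤ 1) (q F : Fin N → ℝ) :
    R_MCCS A U d q F = R_lb A.card (A.image d) q F := by
  rcases A.eq_empty_or_nonempty with rfl | hA
  · obtain rfl := subset_empty.1 hU.1
    simp [R_MCCS, R_lb]
  · have hD' : (A.image d).card = 1 := le_antisymm hD (hA.image d).card_pos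
    obtain ⟨x, hx⟩ := card_eq_one.1 hD'
    obtain ⟨u, rfl⟩ := card_eq_one.1 (hU.card_eq_card_image.trans hD')
    have demand_eq : ∀ k ∈ A, d k = x := fun k hk =>
      mem_singleton.1 (hx ▸ mem_image_of_mem d hk)
    rw [R_MCCS_singleton_leader (hU.1 (mem_singleton_self u)) demand_eq, hx, R_lb_singleton]

lemma R_MCCS_eq_R_lb_of_card_eq_two (hU : IsLeaderGroup A U d) (hA : A.card = 2)
    (hd : Set.InjOn d A) (q F : Fin N → ℝ) :
    R_MCCS A U d q F = R_lb A.card (A.image d) q F := by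
  rw [hU.eq_of_injOn hd, R_MCCS_self_of_card_eq_two hA, hA,
    R_lb_two_of_card_eq_two ((card_image_of_injOn hd).trans hA), sum_image hd, maxOver_image]

lemma R_MCCS_eq_R_lb (hU : IsLeaderGroup A U d) (hA : A.card ≤ 2 ∨ (A.image d).card ≤ 1)
    (q F : Fin N → ℝ) :
    R_MCCS A U d q F = R_lb A.card (A.image d) q F := by
  rcases le_or_gt (A.image d).card 1 with hD | hD
  · exact R_MCCS_eq_R_lb_of_card_image_le_one hU hD q F
  · have hle : (A.image d).card ≤ A.card := card_image_le
    exact R_MCCS_eq_R_lb_of_card_eq_two hU (by omega) (card_image_iff.1 (by omega)) q F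

end Equality

theorem avg_rate_eq_avg_lb_of_card_le_two_general {α ι : Type*} [DecidableEq α] [Fintype ι]
    {N : ℕ} (A U : ι → Finset α) (d : ι → α → Fin N) (w : ι → ℝ) (F : Fin N → ℝ)
    (hA : ∀ i, (A i).card ≤ 2 ∨ ((A i).image (d i)).card ≤ 1)
    (hU : ∀ i, IsLeaderGroup (A i) (U i) (d i)) (q : Fin N → ℝ) :
    ∑ i, w i * R_MCCS (A i) (U i) (d i) q F
      = ∑ i, w i * R_lb (A i).card ((A i).image (d i)) q F :=
  sum_congr rfl fun i _ => by rw [R_MCCS_eq_R_lb (hU i) (hA i)]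

/-- Finitely many demand scenarios, each with active set `A i` of size at most `2`,
demand map `d i`, leader group `U i`, and nonnegative weight `w i`: the weighted
average D-MCCS rate equals the weighted average lower-bound rate for every
placement `q ∈ [0,1]^N`; consequently, for any cache size `M ≥ 0` the infima of the
two average rates over the feasible set
`{q ∈ [0,1]^N : Σ_n q_n F_n ≤ M}` coincide. -/
theorem avg_rate_eq_avg_lb_of_card_le_two {α ι : Type*} [DecidableEq α] [Fintype ι]
    {N : ℕ} (A U : ι → Finset α) (d : ι → α → Fin N) (w : ι → ℝ)
    (F : Fin N → ℝ) (M : ℝ)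
    (hA : ∀ i, (A i).card ≤ 2) (hU : ∀ i, IsLeaderGroup (A i) (U i) (d i))
    (hw : ∀ i, 0 ≤ w i) (hF : ∀ n, 0 ≤ F n) (hM : 0 ≤ M) :
    (∀ q : Fin N → ℝ, (∀ n, q n ∈ Set.Icc (0 : ℝ) 1) →
      ∑ i, w i * R_MCCS (A i) (U i) (d i) q F
        = ∑ i, w i * R_lb (A i).card ((A i).image (d i)) q F) ∧
    sInf ((fun q => ∑ i, w i * R_MCCS (A i) (U i) (d i) q F) ''
        {q : Fin N → ℝ | (∀ n, q n ∈ Set.Icc (0 : ℝ) 1) ∧ ∑ n, q n * F n ≤ M})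
      = sInf ((fun q => ∑ i, w i * R_lb (A i).card ((A i).image (d i)) q F) ''
        {q : Fin N → ℝ | (∀ n, q n ∈ Set.Icc (0 : ℝ) 1) ∧ ∑ n, q n * F n ≤ M}) := by
  have h := avg_rate_eq_avg_lb_of_card_le_two_general A U d w F (fun i => Or.inl (hA i)) hU
  exact ⟨fun q _ => h q, by simp only [h]⟩
end

section
/- Suppose all files have the same size F ≥ 0 (F_n = F for all n) and q* ∈ [0,1]^N is symmetric, i.e., q*_1 = q*_2 = … = q*_N = q. Then for every active set A, every demand map d on A, and every leader group U, R_MCCS(d; q*) = R_lb(D; q*), where D = {d_k : k ∈ A}; consequently, for any finitely many weighted demand scenarios, the average rates satisfy R̄_MCCS(q*) = R̄_lb(q*). -/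
/-!
When all requested files share the cache fraction and the size, the summand of the D-MCCS rate
depends only on `|S|` and the objective of the lower bound does not depend on the bijection `π`.
What remains is a count: enumerate the leaders as `u₁, …, u_m` and sort the sets `S ⊆ A` meeting
`U` by their first leader `u_i`; the other members of `S` form an arbitrary subset of
`A \ {u₁, …, u_i}`, so `C(|A| - i, s)` of these sets have `s + 1` elements.
-/

open Finset

section Counting

variable {α M : Type*} [AddCommMonoid M]

lemma sum_powerset_apply_card_of_card_lt {A : Finset α} {n : ℕ} (hn : #A < n) (g : ℕ → M) :
    ∑ S ∈ A.powerset, g #S = ∑ s ∈ range n, (#A).choose s • g s := by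
  rw [sum_powerset_apply_card]
  refine sum_subset (range_subset_range.2 (Nat.succ_le_of_lt hn)) fun s _ hs => ?_
  have hlt : #A < s := by simpa using hs
  rw [Nat.choose_eq_zero_of_lt hlt, zero_nsmul]

variable [DecidableEq α]

lemma sum_powerset_insert_filter_inter_insert_nonempty {A : Finset α} {a : α} (ha : a ∉ A)
    (U : Finset α) (f : Finset α → M) :
    ∑ S ∈ (insert a A).powerset with (S ∩ insert a U).Nonempty, f S =
      ∑ S ∈ A.powerset with (S ∩ U).Nonempty, f S + ∑ S ∈ A.powerset, f (insert a S) := by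
  simp only [sum_filter]
  rw [sum_powerset_insert ha]
  congr 1
  · refine sum_congr rfl fun S hS => ?_
    have haS : a ∉ S := fun h => ha (mem_powerset.1 hS h)
    rw [inter_insert_of_notMem haS]
  · refine sum_congr rfl fun S _ => if_pos ⟨a, ?_⟩
    exact mem_inter.2 ⟨mem_insert_self a S, mem_insert_self a U⟩

lemma sum_powerset_filter_inter_nonempty_apply_card {A U : Finset α} {n : ℕ} (hUA : U ⊆ A)
    (hn : #A ≤ n) (g : ℕ → M) :
    ∑ S ∈ A.powerset with (S ∩ U).Nonempty, g #S =
      ∑ i ∈ range #U, ∑ s ∈ range n, (#A - (i + 1)).choose s • g (s + 1) := by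
  induction U using Finset.induction_on generalizing A with
  | empty => simp
  | insert a U haU ih =>
    obtain ⟨B, haB, rfl⟩ : ∃ B, a ∉ B ∧ insert a B = A :=
      ⟨A.erase a, notMem_erase a A, insert_erase (hUA (mem_insert_self a U))⟩
    have hUB : U ⊆ B := (insert_subset_insert_iff haU).1 hUA
    rw [card_insert_of_notMem haB] at hn
    have with_a : ∑ S ∈ B.powerset, g #(insert a S) =
        ∑ s ∈ range n, (#B).choose s • g (s + 1) := by
      rw [← sum_powerset_apply_card_of_card_lt hn fun s => g (s + 1)]
      refine sum_congr rfl fun S hS => ?_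
      rw [card_insert_of_notMem fun h => haB (mem_powerset.1 hS h)]
    rw [sum_powerset_insert_filter_inter_insert_nonempty haB, ih hUB (by omega), with_a,
      card_insert_of_notMem haU, card_insert_of_notMem haB, sum_range_succ']
    simp only [Nat.add_sub_add_right, Nat.sub_zero]

end Counting

/-- The common value of the two rates for `n` active users and `m` distinct requested files, all of
size `Fc` and cache fraction `c`. The index `i` is the paper's `i - 1`. -/
noncomputable def symmetricRate (n m : ℕ) (c Fc : ℝ) : ℝ :=
  ∑ i ∈ range m, ∑ s ∈ range n,
    ((n - (i + 1)).choose s : ℝ) * c ^ s * (1 - c) ^ (n - s) * Fc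

lemma maxOver_eq_of_forall_eq {α : Type*} {S : Finset α} {f : α → ℝ} {x : ℝ} (hS : S.Nonempty)
    (hf : ∀ k ∈ S, f k = x) : maxOver S f = x := by
  rw [maxOver, dif_pos hS, sup'_congr hS rfl hf, sup'_const]

section Rates

variable {α : Type*} [DecidableEq α] {N : ℕ} {A U : Finset α} {d : α → Fin N}
  {q F : Fin N → ℝ} {c Fc : ℝ}

lemma IsLeaderGroup.card_image_eq (h : IsLeaderGroup A U d) : #(A.image d) = #U := by
  obtain ⟨-, hinj, himage⟩ := h
  rw [← himage, card_image_of_injOn hinj]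

lemma R_MCCS_eq_symmetricRate (hUA : U ⊆ A) (hq : ∀ k ∈ A, q (d k) = c)
    (hF : ∀ k ∈ A, F (d k) = Fc) : R_MCCS A U d q F = symmetricRate #A #U c Fc := by
  let g (t : ℕ) : ℝ := c ^ (t - 1) * (1 - c) ^ (#A - t + 1) * Fc
  calc
    R_MCCS A U d q F = ∑ S ∈ A.powerset with (S ∩ U).Nonempty, g #S := by
      refine sum_congr rfl fun S hS => ?_
      obtain ⟨hSA, hSU⟩ := mem_filter.1 hS
      refine maxOver_eq_of_forall_eq (hSU.mono inter_subset_left) fun k hk => ?_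
      have hkA : k ∈ A := mem_powerset.1 hSA hk
      rw [hq k hkA, hF k hkA]
    _ = ∑ i ∈ range #U, ∑ s ∈ range #A, (#A - (i + 1)).choose s • g (s + 1) :=
      sum_powerset_filter_inter_nonempty_apply_card hUA le_rfl g
    _ = symmetricRate #A #U c Fc := by
      refine sum_congr rfl fun i _ => sum_congr rfl fun s hs => ?_
      have hexp : #A - (s + 1) + 1 = #A - s := by
        have := mem_range.1 hs
        omega
      simp only [g, hexp, Nat.add_sub_cancel, nsmul_eq_mul, mul_assoc]

lemma R_lb_eq_symmetricRate {D : Finset (Fin N)} (n : ℕ) (hq : ∀ x ∈ D, q x = c)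
    (hF : ∀ x ∈ D, F x = Fc) : R_lb n D q F = symmetricRate n #D c Fc := by
  have : Nonempty (Fin #D ≃ {x : Fin N // x ∈ D}) := ⟨D.equivFin.symm⟩
  simp only [R_lb, hq _ (Subtype.prop _), hF _ (Subtype.prop _), ciSup_const]
  rw [sum_comm, symmetricRate, sum_range]

theorem rate_eq_lb_uniform_symmetric_general (h : IsLeaderGroup A U d)
    (hq : ∀ k ∈ A, q (d k) = c) (hF : ∀ k ∈ A, F (d k) = Fc) :
    R_MCCS A U d q F = R_lb #A (A.image d) q F := by
  rw [R_MCCS_eq_symmetricRate h.1 hq hF,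
    R_lb_eq_symmetricRate #A (forall_mem_image.2 hq) (forall_mem_image.2 hF), h.card_image_eq]

end Rates

/-- Uniform file size `F_n = Fc ≥ 0` and symmetric placement `q*_1 = … = q*_N = c`:
for every active set `A`, demand map `d`, and leader group `U`,
`R_MCCS(d; q*) = R_lb(D; q*)` with `D = {d_k : k ∈ A}`; consequently, for any
finitely many weighted demand scenarios the average rates satisfy
`R̄_MCCS(q*) = R̄_lb(q*)`. -/
theorem rate_eq_lb_uniform_symmetric {α : Type*} [DecidableEq α] {N : ℕ}
    (q F : Fin N → ℝ) (c Fc : ℝ)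
    (hc : c ∈ Set.Icc (0 : ℝ) 1) (hFc : 0 ≤ Fc)
    (hq : ∀ n, q n = c) (hF : ∀ n, F n = Fc) :
    (∀ (A U : Finset α) (d : α → Fin N), IsLeaderGroup A U d →
      R_MCCS A U d q F = R_lb A.card (A.image d) q F) ∧
    (∀ (ι : Type) [Fintype ι] (A U : ι → Finset α) (d : ι → α → Fin N) (w : ι → ℝ),
      (∀ i, 0 ≤ w i) → (∀ i, IsLeaderGroup (A i) (U i) (d i)) →
      ∑ i, w i * R_MCCS (A i) (U i) (d i) q F
        = ∑ i, w i * R_lb (A i).card ((A i).image (d i)) q F) := by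
  have rate_eq (A U : Finset α) (d : α → Fin N) (h : IsLeaderGroup A U d) :=
    rate_eq_lb_uniform_symmetric_general h (fun k _ => hq (d k)) (fun k _ => hF (d k))
  exact ⟨rate_eq, fun ι _ A U d w _ h => sum_congr rfl fun i _ => by rw [rate_eq _ _ _ (h i)]⟩
end
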